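/- (Theorem 3.1.) Let G and H be area metrics on ℝ⁴ and suppose there exists an invertible linear map T : Λ²ℝ⁴ → Λ²ℝ⁴ such that Ĝ(x)(y) = Ĥ(Tx)(Ty) and ω̂_G(x)(y) = ω̂_H(Tx)(Ty) for all x, y ∈ Λ²ℝ⁴. Then there exists t ∈ GL(4,ℝ) such that either G_{abcd} = t^m_a t^n_b t^p_c t^q_d H_{mnpq} for all indices, or G_{abcd} = t^m_a t^n_b t^p_c t^q_d H̃_{mnpq} for all indices, where H̃_{mnpq} = (1/4) ε_{mnij} ε_{pqkl} H_{ijkl} (sum over all i,j,k,l, with ε totally antisymmetric and ε_{0123} = 1). -/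

import Mathlib

noncomputable section

/-- First members of the ordered Petrov index pairs `[01],[02],[03],[12],[31],[23]`. -/
def pFst : Fin 6 → Fin 4 := ![0, 0, 0, 1, 3, 2]

/-- Second members of the ordered Petrov index pairs `[01],[02],[03],[12],[31],[23]`. -/
def pSnd : Fin 6 → Fin 4 := ![1, 2, 3, 2, 1, 3]

/-- The Petrov matrix of a rank-4 covariant tensor on `ℝ⁴`: the symmetric `6 × 6` matrix
of components `G_{abcd}` indexed by the ordered pairs `[01],[02],[03],[12],[31],[23]`. -/
def petrov (G : Fin 4 → Fin 4 → Fin 4 → Fin 4 → ℝ) : Matrix (Fin 6) (Fin 6) ℝ :=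
  Matrix.of fun A B => G (pFst A) (pSnd A) (pFst B) (pSnd B)

/-- The totally antisymmetric Levi-Civita symbol on four indices with `ε₀₁₂₃ = 1`. -/
def eps (a b c d : Fin 4) : ℝ :=
  (Matrix.of fun i j => if (![a, b, c, d] : Fin 4 → Fin 4) i = j then (1 : ℝ) else 0).det

/-- The Petrov index associated to a pair of distinct indices (arbitrary on the diagonal). -/
def bIdx : Fin 4 → Fin 4 → Fin 6 :=
  ![![0, 0, 1, 2], ![0, 0, 3, 4], ![1, 3, 0, 5], ![2, 4, 5, 0]]

/-- The sign relating the tensor component `T_{ab}` to the Petrov component at `bIdx a b`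
(`0` on the diagonal); the pair `[31]` is stored in the order `(3,1)`. -/
def bSgn : Fin 4 → Fin 4 → ℝ :=
  ![![0, 1, 1, 1], ![-1, 0, 1, -1], ![-1, -1, 0, 1], ![-1, 1, -1, 0]]

/-- The rank-4 tensor with the area metric symmetries reconstructed from a
(symmetric) Petrov matrix. -/
def fromPetrov (M : Matrix (Fin 6) (Fin 6) ℝ) : Fin 4 → Fin 4 → Fin 4 → Fin 4 → ℝ :=
  fun a b c d => bSgn a b * bSgn c d * M (bIdx a b) (bIdx c d)

/-- The components `(G⁻¹)^{abcd}` of the inverse area metric, characterized by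
`Petrov(G⁻¹) = Petrov(G)⁻¹`. -/
def ginv (G : Fin 4 → Fin 4 → Fin 4 → Fin 4 → ℝ) : Fin 4 → Fin 4 → Fin 4 → Fin 4 → ℝ :=
  fromPetrov (petrov G)⁻¹

/-- The area metric volume form `(ω_G)_{abcd} = |det Petrov(G)|^{1/6} ε_{abcd}`. -/
def vol (G : Fin 4 → Fin 4 → Fin 4 → Fin 4 → ℝ) (a b c d : Fin 4) : ℝ :=
  |(petrov G).det| ^ ((1 : ℝ) / 6) * eps a b c d

/-- The inverse volume form `(ω_G⁻¹)^{abcd} = |det Petrov(G)|^{-1/6} ε^{abcd}`. -/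
def volInv (G : Fin 4 → Fin 4 → Fin 4 → Fin 4 → ℝ) (a b c d : Fin 4) : ℝ :=
  |(petrov G).det| ^ (-(1 : ℝ) / 6) * eps a b c d

/-- The Fresnel polynomial
`𝒢(k,k,k,k) = -(1/24)(ω_G)_{mnpq}(ω_G)_{rstu}(G⁻¹)^{mnra}(G⁻¹)^{bpsc}(G⁻¹)^{dqtu} k_a k_b k_c k_d`
(all repeated indices summed over `0,…,3`; the symmetrization over `a,b,c,d` in the Fresnel
tensor is immaterial after contraction with `k_a k_b k_c k_d`). -/
def fresnelPoly (G : Fin 4 → Fin 4 → Fin 4 → Fin 4 → ℝ) (k : Fin 4 → ℝ) : ℝ :=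
  -(1 / 24) * ∑ m : Fin 4, ∑ n : Fin 4, ∑ p : Fin 4, ∑ q : Fin 4, ∑ r : Fin 4, ∑ s : Fin 4,
      ∑ t : Fin 4, ∑ u : Fin 4, ∑ a : Fin 4, ∑ b : Fin 4, ∑ c : Fin 4, ∑ d : Fin 4,
    vol G m n p q * vol G r s t u * ginv G m n r a * ginv G b p s c * ginv G d q t u *
      k a * k b * k c * k d

/-- Matrix of the wedge pairing in Petrov coordinates. -/
def wJ : Matrix (Fin 6) (Fin 6) ℝ :=
  !![0,0,0,0,0,1; 0,0,0,0,1,0; 0,0,0,1,0,0; 0,0,1,0,0,0; 0,1,0,0,0,0; 1,0,0,0,0,0]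

/-- The `2 × 2` minor of `t` with rows given by the pair `A` and columns `a b`. -/
def minr (t : Matrix (Fin 4) (Fin 4) ℝ) (A : Fin 6) (a b : Fin 4) : ℝ :=
  t (pFst A) a * t (pSnd A) b - t (pFst A) b * t (pSnd A) a

/-- The second compound matrix of `t` in Petrov coordinates. -/
def lam (t : Matrix (Fin 4) (Fin 4) ℝ) : Matrix (Fin 6) (Fin 6) ℝ :=
  Matrix.of fun A B => minr t A (pFst B) (pSnd B)

lemma wJ_sq : wJ * wJ = 1 := by
  ext i j
  fin_cases i <;> fin_cases j <;> simp [wJ, Matrix.mul_apply, Fin.sum_univ_succ]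

lemma wJ_tr : wJ.transpose = wJ := by
  ext i j
  fin_cases i <;> fin_cases j <;> simp [wJ]

lemma lam_tr (t : Matrix (Fin 4) (Fin 4) ℝ) : (lam t).transpose = lam t.transpose := by
  ext i j
  simp only [lam, minr, Matrix.transpose_apply, Matrix.of_apply]
  ring

lemma lam_one : lam 1 = 1 := by
  ext i j
  fin_cases i <;> fin_cases j <;> simp [lam, minr, pFst, pSnd, Matrix.one_apply]

lemma lam_mul (s t : Matrix (Fin 4) (Fin 4) ℝ) : lam (s * t) = lam s * lam t := by
  ext i j
  simp only [lam, minr, Matrix.mul_apply, Matrix.of_apply, Fin.sum_univ_four,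
    Fin.sum_univ_six]
  generalize pFst j = a
  generalize pSnd j = b
  fin_cases i <;> simp [pFst, pSnd] <;> ring

lemma det_four (s : Matrix (Fin 4) (Fin 4) ℝ) : s.det =
    (s 0 0 * s 1 1 - s 0 1 * s 1 0) * (s 2 2 * s 3 3 - s 2 3 * s 3 2)
    - (s 0 0 * s 1 2 - s 0 2 * s 1 0) * (s 2 1 * s 3 3 - s 2 3 * s 3 1)
    + (s 0 0 * s 1 3 - s 0 3 * s 1 0) * (s 2 1 * s 3 2 - s 2 2 * s 3 1)
    + (s 0 1 * s 1 2 - s 0 2 * s 1 1) * (s 2 0 * s 3 3 - s 2 3 * s 3 0)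
    - (s 0 1 * s 1 3 - s 0 3 * s 1 1) * (s 2 0 * s 3 2 - s 2 2 * s 3 0)
    + (s 0 2 * s 1 3 - s 0 3 * s 1 2) * (s 2 0 * s 3 1 - s 2 1 * s 3 0) := by
  simp [Matrix.det_succ_row_zero, Fin.sum_univ_succ, Fin.succAbove]
  ring

lemma pair_apply (S T : Matrix (Fin 6) (Fin 6) ℝ) (i j : Fin 6) :
    (S.transpose * wJ * T) i j = S 0 i * T 5 j + S 1 i * T 4 j + S 2 i * T 3 j
      + S 3 i * T 2 j + S 4 i * T 1 j + S 5 i * T 0 j := by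
  simp [Matrix.mul_apply, Fin.sum_univ_six, wJ]
  ring

lemma lam_rel (s : Matrix (Fin 4) (Fin 4) ℝ) :
    (lam s).transpose * wJ * lam s = s.det • wJ := by
  ext i j
  rw [pair_apply, det_four]
  fin_cases i <;> fin_cases j <;> simp [lam, minr, pFst, pSnd, wJ] <;> ring

/-- `T` is a conformal isometry of the wedge pairing. -/
def WRel (l : ℝ) (T : Matrix (Fin 6) (Fin 6) ℝ) : Prop := T.transpose * wJ * T = l • wJ

/-- `T` comes from a linear map, up to sign and duality. -/
def Good (T : Matrix (Fin 6) (Fin 6) ℝ) : Prop :=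
  ∃ t : Matrix (Fin 4) (Fin 4) ℝ, IsUnit t.det ∧
    (T = lam t ∨ T = -lam t ∨ T = lam t * wJ ∨ T = -(lam t * wJ))

lemma good_mul {T : Matrix (Fin 6) (Fin 6) ℝ} {s : Matrix (Fin 4) (Fin 4) ℝ}
    (hs : IsUnit s.det) (h : Good T) : Good (lam s * T) := by
  obtain ⟨t, ht, h⟩ := h
  refine ⟨s * t, by rw [Matrix.det_mul]; exact hs.mul ht, ?_⟩
  rcases h with h | h | h | h
  · left; rw [h, lam_mul]
  · right; left; rw [h, lam_mul, mul_neg]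
  · right; right; left; rw [h, lam_mul, mul_assoc]
  · right; right; right; rw [h, lam_mul, mul_neg, mul_assoc]

lemma rel_step {T : Matrix (Fin 6) (Fin 6) ℝ} {l : ℝ} (hl : l ≠ 0) (hT : WRel l T)
    (s : Matrix (Fin 4) (Fin 4) ℝ) (hs : s.det ≠ 0) :
    ∃ (T' : Matrix (Fin 6) (Fin 6) ℝ) (l' : ℝ), l' ≠ 0 ∧ WRel l' T' ∧ (Good T' → Good T) ∧
      ∀ i j, (∀ k, T k i = lam s k j) → ∀ k, T' k i = if k = j then 1 else 0 := by
  have hu : IsUnit s.det := isUnit_iff_ne_zero.mpr hs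
  have h1 : lam s * lam s⁻¹ = 1 := by rw [← lam_mul, Matrix.mul_nonsing_inv _ hu, lam_one]
  have h2 : lam s⁻¹ * lam s = 1 := by rw [← lam_mul, Matrix.nonsing_inv_mul _ hu, lam_one]
  refine ⟨lam s⁻¹ * T, s⁻¹.det * l, ?_, ?_, ?_, ?_⟩
  · refine mul_ne_zero ?_ hl
    rw [Matrix.det_nonsing_inv, Ring.inverse_eq_inv']
    exact inv_ne_zero hs
  · unfold WRel at *
    calc (lam s⁻¹ * T).transpose * wJ * (lam s⁻¹ * T)
        = T.transpose * ((lam s⁻¹).transpose * wJ * lam s⁻¹) * T := by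
          rw [Matrix.transpose_mul]; simp only [mul_assoc]
      _ = _ := by
          rw [lam_rel, Matrix.mul_smul, Matrix.smul_mul, hT, smul_smul]
  · intro h
    have := good_mul hu h
    rwa [← mul_assoc, h1, one_mul] at this
  · intro i j h k
    have : (lam s⁻¹ * T) k i = (lam s⁻¹ * lam s) k j := by
      simp only [Matrix.mul_apply, h]
    rw [this, h2, Matrix.one_apply]

lemma rel_apply {l : ℝ} {T : Matrix (Fin 6) (Fin 6) ℝ} (h : WRel l T) (i j : Fin 6) :
    T 0 i * T 5 j + T 1 i * T 4 j + T 2 i * T 3 j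
      + T 3 i * T 2 j + T 4 i * T 1 j + T 5 i * T 0 j = l * wJ i j := by
  rw [← pair_apply, h, Matrix.smul_apply, smul_eq_mul]

/-- Every nonzero null bivector is the image of `e₀ ∧ e₁`. -/
lemma null_decomp (p : Fin 6 → ℝ) (hp : p ≠ 0) (hn : p 0 * p 5 + p 1 * p 4 + p 2 * p 3 = 0) :
    ∃ s : Matrix (Fin 4) (Fin 4) ℝ, s.det ≠ 0 ∧ ∀ k, p k = lam s k 0 := by
  have hex : ∃ k, p k ≠ 0 := by
    by_contra! h
    exact hp (funext h)
  obtain ⟨k, hk⟩ := hex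
  fin_cases k <;> simp only [Fin.zero_eta, Fin.mk_one, Fin.reduceFinMk] at hk
  · refine ⟨!![0, -p 0, 0, 0; 1, 0, 0, 0; p 1 / p 0, p 3, 1, 0; p 2 / p 0, -p 4, 0, 1],
      by rw [det_four]; simpa using hk, ?_⟩
    intro k
    fin_cases k <;> simp [lam, minr, pFst, pSnd] <;> field_simp <;> linarith
  · refine ⟨!![0, -p 1, 0, 0; p 0 / p 1, -p 3, 1, 0; 1, 0, 0, 0; p 2 / p 1, p 5, 0, 1],
      by rw [det_four]; simpa using hk, ?_⟩
    intro k
    fin_cases k <;> simp [lam, minr, pFst, pSnd] <;> field_simp <;> linarith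
  · refine ⟨!![0, -p 2, 0, 0; p 0 / p 2, p 4, 1, 0; p 1 / p 2, -p 5, 0, 1; 1, 0, 0, 0],
      by rw [det_four]; simpa using hk, ?_⟩
    intro k
    fin_cases k <;> simp [lam, minr, pFst, pSnd] <;> field_simp <;> linarith
  · refine ⟨!![-p 0 / p 3, -p 1, 1, 0; 0, -p 3, 0, 0; 1, 0, 0, 0; -p 4 / p 3, p 5, 0, 1],
      by rw [det_four]; simpa using hk, ?_⟩
    intro k
    fin_cases k <;> simp [lam, minr, pFst, pSnd] <;> field_simp <;> linarith
  · refine ⟨!![-p 2 / p 4, -p 0, 1, 0; 1, 0, 0, 0; -p 5 / p 4, p 3, 0, 1; 0, -p 4, 0, 0],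
      by rw [det_four]; simpa using hk, ?_⟩
    intro k
    fin_cases k <;> simp [lam, minr, pFst, pSnd] <;> field_simp <;> linarith
  · refine ⟨!![-p 1 / p 5, -p 2, 1, 0; -p 3 / p 5, p 4, 0, 1; 0, -p 5, 0, 0; 1, 0, 0, 0],
      by rw [det_four]; simpa using hk, ?_⟩
    intro k
    fin_cases k <;> simp [lam, minr, pFst, pSnd] <;> field_simp <;> linarith

/-- Null bivectors in the complement of the hyperbolic plane of `e₀ ∧ e₁`, `e₂ ∧ e₃`. -/
lemma null_decomp_two (p : Fin 6 → ℝ) (hp : p ≠ 0) (h0 : p 0 = 0) (h5 : p 5 = 0)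
    (hn : p 1 * p 4 + p 2 * p 3 = 0) :
    ∃ s : Matrix (Fin 4) (Fin 4) ℝ, s.det ≠ 0 ∧ (∀ k, p k = lam s k 1) ∧
      (∀ k, (if k = 0 then (1 : ℝ) else 0) = lam s k 0) ∧
      (∀ k, (if k = 5 then (1 : ℝ) else 0) = lam s k 5) := by
  have hex : ∃ k, p k ≠ 0 := by
    by_contra! h
    exact hp (funext h)
  have key : ∀ a0 a1 b2 b3 c0 c1 d2 d3 : ℝ, a0 * c1 - a1 * c0 = 1 → b2 * d3 - b3 * d2 = 1 →
      p 1 = a0 * b2 → p 2 = a0 * b3 → p 3 = a1 * b2 → p 4 = - (a1 * b3) →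
      ∃ s : Matrix (Fin 4) (Fin 4) ℝ, s.det ≠ 0 ∧ (∀ k, p k = lam s k 1) ∧
      (∀ k, (if k = 0 then (1 : ℝ) else 0) = lam s k 0) ∧
      (∀ k, (if k = 5 then (1 : ℝ) else 0) = lam s k 5) := by
    intro a0 a1 b2 b3 c0 c1 d2 d3 hac hbd h1 h2 h3 h4
    refine ⟨!![a0, c0, 0, 0; a1, c1, 0, 0; 0, 0, b2, d2; 0, 0, b3, d3], ?_, ?_, ?_, ?_⟩
    · have : (!![a0, c0, 0, 0; a1, c1, 0, 0; 0, 0, b2, d2; 0, 0, b3, d3] :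
          Matrix (Fin 4) (Fin 4) ℝ).det
          = (a0 * c1 - a1 * c0) * (b2 * d3 - b3 * d2) := by
        rw [det_four]; simp; ring
      rw [this, hac, hbd]; norm_num
    · intro k
      fin_cases k <;> simp [lam, minr, pFst, pSnd] <;> linarith
    · intro k
      fin_cases k <;> simp [lam, minr, pFst, pSnd] <;> linarith
    · intro k
      fin_cases k <;> simp [lam, minr, pFst, pSnd] <;> linarith
  obtain ⟨k, hk⟩ := hex
  fin_cases k <;> simp only [Fin.zero_eta, Fin.mk_one, Fin.reduceFinMk] at hk
  · exact absurd h0 hk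
  · apply key 1 (p 3 / p 1) (p 1) (p 2) 0 1 0 (1 / p 1) <;> field_simp <;> linarith
  · apply key 1 (-p 4 / p 2) (p 1) (p 2) 0 1 (-1 / p 2) 0 <;> field_simp <;> linarith
  · apply key (p 1 / p 3) 1 (p 3) (-p 4) (-1) 0 0 (1 / p 3) <;> field_simp <;> linarith
  · apply key (-p 2 / p 4) 1 (p 3) (-p 4) (-1) 0 (1 / p 4) 0 <;> field_simp <;> linarith
  · exact absurd h5 hk

/-- Final step: all but two columns are normalized. -/
lemma good_final {T : Matrix (Fin 6) (Fin 6) ℝ} (hT : WRel 1 T)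
    (c0 : ∀ k, T k 0 = if k = 0 then 1 else 0) (c5 : ∀ k, T k 5 = if k = 5 then 1 else 0)
    (c1 : ∀ k, T k 1 = if k = 1 then 1 else 0) (c4 : ∀ k, T k 4 = if k = 4 then 1 else 0) :
    Good T := by
  have r02 := rel_apply hT 0 2
  have r03 := rel_apply hT 0 3
  have r52 := rel_apply hT 5 2
  have r53 := rel_apply hT 5 3
  have r12 := rel_apply hT 1 2
  have r13 := rel_apply hT 1 3
  have r42 := rel_apply hT 4 2
  have r43 := rel_apply hT 4 3
  have r22 := rel_apply hT 2 2
  have r23 := rel_apply hT 2 3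
  have r33 := rel_apply hT 3 3
  simp [c0, c1, c4, c5, wJ] at r02 r03 r52 r53 r12 r13 r42 r43 r22 r23 r33
  simp [r02, r03, r52, r53, r12, r13, r42, r43] at r22 r23 r33
  have e22 : T 2 2 * T 3 2 = 0 := by linarith
  have e33 : T 2 3 * T 3 3 = 0 := by linarith
  have sq : ∀ x : ℝ, 0 < x → ∃ a b : ℝ, a * a = x ∧ a * b = 1 ∧ b * b * x = 1 := by
    intro x hx
    refine ⟨√x, (√x)⁻¹, Real.mul_self_sqrt hx.le, mul_inv_cancel₀ (Real.sqrt_pos.mpr hx).ne', ?_⟩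
    have h1 := Real.mul_self_sqrt hx.le
    have h2 := mul_inv_cancel₀ (Real.sqrt_pos.mpr hx).ne'
    calc (√x)⁻¹ * (√x)⁻¹ * x = (√x)⁻¹ * (√x)⁻¹ * (√x * √x) := by rw [h1]
      _ = (√x * (√x)⁻¹) * (√x * (√x)⁻¹) := by ring
      _ = 1 := by rw [h2]; norm_num
  rcases mul_eq_zero.mp e22 with hp | hq
  · have hr : T 3 2 * T 2 3 = 1 := by simpa [hp] using r23
    have hq0 : T 2 3 ≠ 0 := by intro h; simp [h] at hr
    have hs : T 3 3 = 0 := by simpa [hq0] using e33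
    rcases lt_or_gt_of_ne hq0 with hneg | hpos
    · obtain ⟨a, b, h1, h2, h3⟩ := sq (-T 2 3) (by linarith)
      have hb : b * b = - T 3 2 := by linear_combination (-T 3 2) * h3 - (b * b) * hr
      refine ⟨!![0, 0, 0, -a; 0, 0, -b, 0; 0, b, 0, 0; a, 0, 0, 0], ?_, ?_⟩
      · rw [det_four, isUnit_iff_ne_zero]
        have : a ≠ 0 := by rintro rfl; simp at h2
        have : b ≠ 0 := by rintro rfl; simp at h2
        simp; tauto
      · right; right; right
        ext i j
        fin_cases j <;> fin_cases i <;>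
          simp [c0, c1, c4, c5, lam, minr, pFst, pSnd, Matrix.mul_apply, Fin.sum_univ_six, wJ,
            r02, r03, r52, r53, r12, r13, r42, r43, hp, hs] <;> linarith
    · obtain ⟨a, b, h1, h2, h3⟩ := sq (T 2 3) hpos
      have hb : b * b = T 3 2 := by linear_combination (T 3 2) * h3 - (b * b) * hr
      refine ⟨!![0, 0, 0, -a; 0, 0, b, 0; 0, -b, 0, 0; a, 0, 0, 0], ?_, ?_⟩
      · rw [det_four, isUnit_iff_ne_zero]
        have : a ≠ 0 := by rintro rfl; simp at h2
        have : b ≠ 0 := by rintro rfl; simp at h2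
        simp; tauto
      · right; right; left
        ext i j
        fin_cases j <;> fin_cases i <;>
          simp [c0, c1, c4, c5, lam, minr, pFst, pSnd, Matrix.mul_apply, Fin.sum_univ_six, wJ,
            r02, r03, r52, r53, r12, r13, r42, r43, hp, hs] <;> linarith
  · have hr : T 2 2 * T 3 3 = 1 := by simpa [hq] using r23
    have hq0 : T 3 3 ≠ 0 := by intro h; simp [h] at hr
    have hp0 : T 2 2 ≠ 0 := by intro h; simp [h] at hr
    have hs : T 2 3 = 0 := by simpa [hq0] using e33
    rcases lt_or_gt_of_ne hp0 with hneg | hpos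
    · obtain ⟨a, b, h1, h2, h3⟩ := sq (-T 2 2) (by linarith)
      have hb : b * b = - T 3 3 := by linear_combination (-T 3 3) * h3 - (b * b) * hr
      refine ⟨!![a, 0, 0, 0; 0, -b, 0, 0; 0, 0, -b, 0; 0, 0, 0, a], ?_, ?_⟩
      · rw [det_four, isUnit_iff_ne_zero]
        have : a ≠ 0 := by rintro rfl; simp at h2
        have : b ≠ 0 := by rintro rfl; simp at h2
        simp; tauto
      · right; left
        ext i j
        fin_cases j <;> fin_cases i <;>
          simp [c0, c1, c4, c5, lam, minr, pFst, pSnd,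
            r02, r03, r52, r53, r12, r13, r42, r43, hq, hs] <;> linarith
    · obtain ⟨a, b, h1, h2, h3⟩ := sq (T 2 2) hpos
      have hb : b * b = T 3 3 := by linear_combination (T 3 3) * h3 - (b * b) * hr
      refine ⟨!![a, 0, 0, 0; 0, b, 0, 0; 0, 0, b, 0; 0, 0, 0, a], ?_, ?_⟩
      · rw [det_four, isUnit_iff_ne_zero]
        have : a ≠ 0 := by rintro rfl; simp at h2
        have : b ≠ 0 := by rintro rfl; simp at h2
        simp; tauto
      · left
        ext i j
        fin_cases j <;> fin_cases i <;>
          simp [c0, c1, c4, c5, lam, minr, pFst, pSnd,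
            r02, r03, r52, r53, r12, r13, r42, r43, hq, hs] <;> linarith

lemma col_ne_zero {l : ℝ} {T : Matrix (Fin 6) (Fin 6) ℝ} (hl : l ≠ 0) (hT : WRel l T)
    (i j : Fin 6) (hij : wJ i j = 1) : (fun k => T k i) ≠ 0 := by
  intro h
  have h' : ∀ k, T k i = 0 := fun k => congrFun h k
  have := rel_apply hT i j
  simp [h', hij] at this
  exact hl this.symm

lemma rel_good {l : ℝ} {T : Matrix (Fin 6) (Fin 6) ℝ} (hl : l ≠ 0) (hT : WRel l T) : Good T := by
  -- normalize the first column
  obtain ⟨s, hs, hk⟩ := null_decomp (fun k => T k 0) (col_ne_zero hl hT 0 5 (by simp [wJ]))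
    (by
      have := rel_apply hT 0 0
      simp [wJ] at this
      linarith)
  obtain ⟨T1, l1, hl1, hT1, hg1, hc1⟩ := rel_step hl hT s hs
  apply hg1
  have c0 := hc1 0 0 hk
  clear hg1 hc1 hk hs s hT hl
  -- normalize the last column
  have h5 : T1 5 5 = l1 := by
    have := rel_apply hT1 0 5
    simpa [c0, wJ] using this
  have h55 : T1 5 5 ≠ 0 := by rw [h5]; exact hl1
  have hn5 := rel_apply hT1 5 5
  simp [wJ] at hn5
  obtain ⟨T2, l2, hl2, hT2, hg2, hc2⟩ := rel_step hl1 hT1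
    !![1, 0, -T1 1 5 / T1 5 5, -T1 2 5; 0, 1, -T1 3 5 / T1 5 5, T1 4 5; 0, 0, 0, -T1 5 5;
      0, 0, 1, 0] (by rw [det_four]; simpa using h55)
  apply hg2
  have d0 := hc2 0 0 (by
    intro k
    rw [c0]
    fin_cases k <;> simp [lam, minr, pFst, pSnd])
  have d5 := hc2 5 5 (by
    intro k
    fin_cases k <;> simp [lam, minr, pFst, pSnd] <;> field_simp <;> linarith)
  clear hg2 hc2 hn5 h55 h5 c0 hT1
  have hl2one : l2 = 1 := by
    have := rel_apply hT2 0 5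
    simp [d0, d5, wJ] at this
    exact this.symm
  subst hl2one
  -- normalize the second column
  have z5 : T2 5 1 = 0 := by simpa [d0, wJ] using rel_apply hT2 0 1
  have z0 : T2 0 1 = 0 := by simpa [d5, wJ] using rel_apply hT2 5 1
  obtain ⟨s, hs, hk, hk0, hk5⟩ := null_decomp_two (fun k => T2 k 1)
    (col_ne_zero hl2 hT2 1 4 (by simp [wJ])) z0 z5
    (by
      have := rel_apply hT2 1 1
      simp [wJ, z0, z5] at this
      linarith)
  obtain ⟨T3, l3, hl3, hT3, hg3, hc3⟩ := rel_step hl2 hT2 s hs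
  apply hg3
  have f0 := hc3 0 0 (fun k => (d0 k).trans (hk0 k))
  have f5 := hc3 5 5 (fun k => (d5 k).trans (hk5 k))
  have f1 := hc3 1 1 hk
  clear hg3 hc3 hk hk0 hk5 hs s d0 d5 z0 z5 hT2
  have hl3one : l3 = 1 := by
    have := rel_apply hT3 0 5
    simp [f0, f5, wJ] at this
    exact this.symm
  subst hl3one
  -- normalize the fifth column
  have z5 : T3 5 4 = 0 := by simpa [f0, wJ] using rel_apply hT3 0 4
  have z0 : T3 0 4 = 0 := by simpa [f5, wJ] using rel_apply hT3 5 4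
  have z4 : T3 4 4 = 1 := by simpa [f1, wJ] using rel_apply hT3 1 4
  have hn := rel_apply hT3 4 4
  simp [wJ, z0, z5, z4] at hn
  obtain ⟨T4, l4, hl4, hT4, hg4, hc4⟩ := rel_step hl3 hT3
    !![1, -T3 2 4, 0, 0; 0, 1, 0, 0; 0, 0, 1, -T3 3 4; 0, 0, 0, 1]
    (by rw [det_four]; simp)
  apply hg4
  have g0 := hc4 0 0 (by
    intro k
    rw [f0]
    fin_cases k <;> simp [lam, minr, pFst, pSnd])
  have g1 := hc4 1 1 (by
    intro k
    rw [f1]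
    fin_cases k <;> simp [lam, minr, pFst, pSnd])
  have g5 := hc4 5 5 (by
    intro k
    rw [f5]
    fin_cases k <;> simp [lam, minr, pFst, pSnd])
  have g4 := hc4 4 4 (by
    intro k
    fin_cases k <;> simp [lam, minr, pFst, pSnd, z0, z5, z4] <;> linarith)
  have hl4one : l4 = 1 := by
    have := rel_apply hT4 0 5
    simp [g0, g5, wJ] at this
    exact this.symm
  subst hl4one
  exact good_final hT4 g0 g5 g1 g4

lemma rel_transpose {l : ℝ} {T : Matrix (Fin 6) (Fin 6) ℝ} (hl : l ≠ 0) (hT : WRel l T) :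
    WRel l T.transpose := by
  unfold WRel at *
  rw [Matrix.transpose_transpose]
  have h1 : (l⁻¹ • (wJ * T.transpose * wJ)) * T = 1 := by
    rw [Matrix.smul_mul, mul_assoc wJ, mul_assoc wJ, hT, Matrix.mul_smul, wJ_sq, smul_smul,
      inv_mul_cancel₀ hl, one_smul]
  have h2 := mul_eq_one_comm.mp h1
  calc T * wJ * T.transpose
      = l • (T * (l⁻¹ • (wJ * T.transpose * wJ))) * wJ := by
        rw [Matrix.mul_smul, smul_smul, mul_inv_cancel₀ hl, one_smul, mul_assoc, mul_assoc,
          mul_assoc, mul_assoc, wJ_sq, mul_one]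
    _ = l • wJ := by rw [h2, Matrix.smul_mul, one_mul]

/-- Kronecker delta. -/
def dl (a j : Fin 4) : ℝ := if a = j then 1 else 0

lemma eps_eq (a b c d : Fin 4) : eps a b c d =
    (dl a 0 * dl b 1 - dl a 1 * dl b 0) * (dl c 2 * dl d 3 - dl c 3 * dl d 2)
    - (dl a 0 * dl b 2 - dl a 2 * dl b 0) * (dl c 1 * dl d 3 - dl c 3 * dl d 1)
    + (dl a 0 * dl b 3 - dl a 3 * dl b 0) * (dl c 1 * dl d 2 - dl c 2 * dl d 1)
    + (dl a 1 * dl b 2 - dl a 2 * dl b 1) * (dl c 0 * dl d 3 - dl c 3 * dl d 0)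
    - (dl a 1 * dl b 3 - dl a 3 * dl b 1) * (dl c 0 * dl d 2 - dl c 2 * dl d 0)
    + (dl a 2 * dl b 3 - dl a 3 * dl b 2) * (dl c 0 * dl d 1 - dl c 1 * dl d 0) := by
  unfold eps
  rw [det_four]
  rfl

lemma petrov_vol (G : Fin 4 → Fin 4 → Fin 4 → Fin 4 → ℝ) :
    petrov (vol G) = (|(petrov G).det| ^ ((1 : ℝ) / 6)) • wJ := by
  ext i j
  simp only [petrov, vol, Matrix.of_apply, Matrix.smul_apply, smul_eq_mul]
  congr 1
  rw [eps_eq]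
  fin_cases i <;> fin_cases j <;> simp [pFst, pSnd, wJ, dl]

/-- Contraction with an antisymmetric array in terms of minors. -/
lemma sum_antisymm (t : Matrix (Fin 4) (Fin 4) ℝ) (f : Fin 4 → Fin 4 → ℝ)
    (hf : ∀ m n, f m n = - f n m) (a b : Fin 4) :
    ∑ m, ∑ n, t m a * t n b * f m n = ∑ A, minr t A a b * f (pFst A) (pSnd A) := by
  have hd : ∀ m, f m m = 0 := fun m => by linarith [hf m m]
  simp only [Fin.sum_univ_four, Fin.sum_univ_six, minr, pFst, pSnd]
  simp [hd]
  rw [hf 1 0, hf 2 0, hf 3 0, hf 2 1, hf 1 3, hf 3 2]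
  ring

lemma antisymm_ext (f g : Fin 4 → Fin 4 → ℝ) (hf : ∀ m n, f m n = - f n m)
    (hg : ∀ m n, g m n = - g n m) (h : ∀ A, f (pFst A) (pSnd A) = g (pFst A) (pSnd A)) :
    ∀ a b, f a b = g a b := by
  have hd : ∀ m, f m m = 0 := fun m => by linarith [hf m m]
  have hd' : ∀ m, g m m = 0 := fun m => by linarith [hg m m]
  have h0 := h 0
  have h1 := h 1
  have h2 := h 2
  have h3 := h 3
  have h4 := h 4
  have h5 := h 5
  simp [pFst, pSnd] at h0 h1 h2 h3 h4 h5
  intro a b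
  fin_cases a <;> fin_cases b <;> simp [hd, hd', h0, h1, h2, h3, h4, h5] <;>
    rw [hf, hg] <;> simp [h0, h1, h2, h3, h4, h5]

/-- Tensors are determined by their Petrov matrices. -/
lemma pull_eq (G K : Fin 4 → Fin 4 → Fin 4 → Fin 4 → ℝ) (t : Matrix (Fin 4) (Fin 4) ℝ)
    (hG1 : ∀ a b c d, G a b c d = - G b a c d) (hG2 : ∀ a b c d, G a b c d = - G a b d c)
    (hK1 : ∀ a b c d, K a b c d = - K b a c d) (hK2 : ∀ a b c d, K a b c d = - K a b d c)
    (h : petrov G = (lam t).transpose * petrov K * lam t) (a b c d : Fin 4) :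
    G a b c d = ∑ m : Fin 4, ∑ n : Fin 4, ∑ p : Fin 4, ∑ q : Fin 4,
            t m a * t n b * t p c * t q d * K m n p q := by
  have hpull : ∀ a b c d, ∑ m : Fin 4, ∑ n : Fin 4, ∑ p : Fin 4, ∑ q : Fin 4,
            t m a * t n b * t p c * t q d * K m n p q =
      ∑ A, ∑ B, minr t A a b * (minr t B c d * K (pFst A) (pSnd A) (pFst B) (pSnd B)) := by
    intro a b c d
    have : ∀ m n, ∑ p : Fin 4, ∑ q : Fin 4, t m a * t n b * t p c * t q d * K m n p q
        = t m a * t n b * ∑ B, minr t B c d * K m n (pFst B) (pSnd B) := by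
      intro m n
      rw [← sum_antisymm t (fun p q => K m n p q) (fun p q => hK2 m n p q), Finset.mul_sum]
      refine Finset.sum_congr rfl fun p _ => ?_
      rw [Finset.mul_sum]
      refine Finset.sum_congr rfl fun q _ => ?_
      ring
    simp only [this]
    rw [sum_antisymm t (fun m n => ∑ B, minr t B c d * K m n (pFst B) (pSnd B))]
    · simp only [Finset.mul_sum]
    · intro m n
      rw [← Finset.sum_neg_distrib]
      refine Finset.sum_congr rfl fun B _ => ?_
      rw [hK1]; ring
  rw [hpull]
  have hm : ∀ A a b, minr t A a b = - minr t A b a := by intro A a b; unfold minr; ring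
  revert a b
  refine antisymm_ext _ _ (fun a b => hG1 a b c d) ?_ ?_
  · intro a b
    simp only [← Finset.sum_neg_distrib]
    refine Finset.sum_congr rfl fun A _ => Finset.sum_congr rfl fun B _ => ?_
    rw [hm A a b]; ring
  intro C
  revert c d
  refine antisymm_ext _ _ (fun c d => hG2 _ _ c d) ?_ ?_
  · intro c d
    simp only [← Finset.sum_neg_distrib]
    refine Finset.sum_congr rfl fun A _ => Finset.sum_congr rfl fun B _ => ?_
    rw [hm B c d]; ring
  intro D
  have := congrFun (congrFun h C) D
  simp only [petrov, Matrix.of_apply, Matrix.mul_apply, Matrix.transpose_apply, lam] at this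
  rw [this, Finset.sum_comm]
  refine Finset.sum_congr rfl fun A _ => ?_
  rw [Finset.sum_mul]
  refine Finset.sum_congr rfl fun B _ => ?_
  ring

/-- The double dual of a tensor. -/
def dual (H : Fin 4 → Fin 4 → Fin 4 → Fin 4 → ℝ) (m n p q : Fin 4) : ℝ :=
  (1 / 4) * ∑ i : Fin 4, ∑ j : Fin 4, ∑ l : Fin 4, ∑ o : Fin 4,
                eps m n i j * eps p q l o * H i j l o

lemma eps_asymm (a b c d : Fin 4) : eps a b c d = - eps b a c d := by
  rw [eps_eq, eps_eq]
  ring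

lemma eps_contract (f : Fin 4 → Fin 4 → ℝ) (hf : ∀ m n, f m n = - f n m) (A : Fin 6) :
    ∑ i, ∑ j, eps (pFst A) (pSnd A) i j * f i j
      = 2 * ∑ B, wJ A B * f (pFst B) (pSnd B) := by
  have hd : ∀ m, f m m = 0 := fun m => by linarith [hf m m]
  simp only [eps_eq, Fin.sum_univ_four, Fin.sum_univ_six]
  fin_cases A <;> simp [pFst, pSnd, wJ, dl] <;>
  linarith [hf 1 0, hf 2 0, hf 3 0, hf 2 1, hf 1 3, hf 3 2]

lemma petrov_dual (H : Fin 4 → Fin 4 → Fin 4 → Fin 4 → ℝ)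
    (hH1 : ∀ a b c d, H a b c d = - H b a c d) (hH2 : ∀ a b c d, H a b c d = - H a b d c) :
    petrov (dual H) = wJ * petrov H * wJ := by
  ext C D
  simp only [petrov, Matrix.of_apply, dual]
  have : ∀ i j, ∑ l : Fin 4, ∑ o : Fin 4, eps (pFst C) (pSnd C) i j *
      eps (pFst D) (pSnd D) l o * H i j l o = eps (pFst C) (pSnd C) i j *
        (2 * ∑ B, wJ D B * H i j (pFst B) (pSnd B)) := by
    intro i j
    rw [← eps_contract (fun l o => H i j l o) (fun l o => hH2 i j l o), Finset.mul_sum]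
    refine Finset.sum_congr rfl fun p _ => ?_
    rw [Finset.mul_sum]
    refine Finset.sum_congr rfl fun q _ => ?_
    ring
  simp only [this]
  rw [eps_contract (fun i j => 2 * ∑ B, wJ D B * H i j (pFst B) (pSnd B))]
  · have hw : ∀ B, wJ B D = wJ D B := fun B => congrFun (congrFun wJ_tr D) B
    simp only [Matrix.mul_apply, Matrix.of_apply, Finset.mul_sum, Finset.sum_mul, hw]
    rw [Finset.sum_comm]
    refine Finset.sum_congr rfl fun A _ => Finset.sum_congr rfl fun B _ => ?_
    ring
  · intro m n
    rw [← mul_neg, ← Finset.sum_neg_distrib]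
    congr 1
    refine Finset.sum_congr rfl fun B _ => ?_
    rw [hH1]; ring

/-- Theorem 3.1.  Let `G` and `H` be area metrics on `ℝ⁴` and suppose a
single invertible linear map `T` of `Λ²ℝ⁴` (represented in Petrov coordinates as a `6 × 6`
matrix) realizes the weak equivalences `Ĝ(x)(y) = Ĥ(Tx)(Ty)` and
`ω̂_G(x)(y) = ω̂_H(Tx)(Ty)` simultaneously.  Then there is `t ∈ GL(4,ℝ)` with either
`G_{abcd} = t^m_a t^n_b t^p_c t^q_d H_{mnpq}` or
`G_{abcd} = t^m_a t^n_b t^p_c t^q_d H̃_{mnpq}`, where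
`H̃_{mnpq} = (1/4) ε_{mnij} ε_{pqkl} H_{ijkl}`. -/
theorem strong_equivalence_of_simultaneous_weak_equivalence
    (G H : Fin 4 → Fin 4 → Fin 4 → Fin 4 → ℝ)
    (hsymG : ∀ a b c d, G a b c d = G c d a b)
    (hasymG : ∀ a b c d, G a b c d = - G b a c d)
    (hinvG : IsUnit (petrov G).det)
    (hsymH : ∀ a b c d, H a b c d = H c d a b)
    (hasymH : ∀ a b c d, H a b c d = - H b a c d)
    (hinvH : IsUnit (petrov H).det)
    (T : Matrix (Fin 6) (Fin 6) ℝ) (hT : IsUnit T.det)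
    (hGH : petrov G = T.transpose * petrov H * T)
    (hvol : petrov (vol G) = T.transpose * petrov (vol H) * T) :
    ∃ t : Matrix (Fin 4) (Fin 4) ℝ, IsUnit t.det ∧
      ((∀ a b c d, G a b c d =
          ∑ m : Fin 4, ∑ n : Fin 4, ∑ p : Fin 4, ∑ q : Fin 4,
            t m a * t n b * t p c * t q d * H m n p q) ∨
       (∀ a b c d, G a b c d =
          ∑ m : Fin 4, ∑ n : Fin 4, ∑ p : Fin 4, ∑ q : Fin 4,
            t m a * t n b * t p c * t q d *
              ((1 / 4) * ∑ i : Fin 4, ∑ j : Fin 4, ∑ l : Fin 4, ∑ o : Fin 4,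
                eps m n i j * eps p q l o * H i j l o))) := by
  have asym2 : ∀ K : Fin 4 → Fin 4 → Fin 4 → Fin 4 → ℝ, (∀ a b c d, K a b c d = K c d a b) →
      (∀ a b c d, K a b c d = - K b a c d) → ∀ a b c d, K a b c d = - K a b d c := by
    intro K h1 h2 a b c d
    rw [h1 a b c d, h2, h1 d c a b]
  have hG2 := asym2 G hsymG hasymG
  have hH2 := asym2 H hsymH hasymH
  have hpos : ∀ K : Fin 4 → Fin 4 → Fin 4 → Fin 4 → ℝ, IsUnit (petrov K).det →
      |(petrov K).det| ^ ((1 : ℝ) / 6) ≠ 0 := fun K hK =>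
    (Real.rpow_pos_of_pos (abs_pos.mpr hK.ne_zero) _).ne'
  have hg := hpos G hinvG
  have hh := hpos H hinvH
  rw [petrov_vol, petrov_vol] at hvol
  generalize |(petrov G).det| ^ ((1 : ℝ) / 6) = g at hg hvol
  generalize |(petrov H).det| ^ ((1 : ℝ) / 6) = h at hh hvol
  have hrel : WRel (h⁻¹ * g) T := by
    unfold WRel
    rw [← smul_smul, hvol, Matrix.mul_smul, Matrix.smul_mul, smul_smul, inv_mul_cancel₀ hh,
      one_smul]
  have hl : h⁻¹ * g ≠ 0 := mul_ne_zero (inv_ne_zero hh) hg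
  obtain ⟨t, ht, hc⟩ := rel_good hl (rel_transpose hl hrel)
  refine ⟨t.transpose, by rwa [Matrix.det_transpose], ?_⟩
  have hT' : T = lam t.transpose ∨ T = -lam t.transpose ∨ T = wJ * lam t.transpose ∨
      T = -(wJ * lam t.transpose) := by
    have key : ∀ X, T.transpose = X → T = X.transpose := by
      rintro X rfl
      rw [Matrix.transpose_transpose]
    rcases hc with hc | hc | hc | hc
    · left; rw [key _ hc, lam_tr]
    · right; left; rw [key _ hc, Matrix.transpose_neg, lam_tr]
    · right; right; left; rw [key _ hc, Matrix.transpose_mul, lam_tr, wJ_tr]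
    · right; right; right
      rw [key _ hc, Matrix.transpose_neg, Matrix.transpose_mul, lam_tr, wJ_tr]
  have hfin : petrov G = (lam t.transpose).transpose * petrov H * lam t.transpose ∨
      petrov G = (lam t.transpose).transpose * petrov (dual H) * lam t.transpose := by
    rw [petrov_dual H hasymH hH2]
    rcases hT' with h | h | h | h
    · left; rw [hGH, h]
    · left; rw [hGH, h]; simp
    · right; rw [hGH, h, Matrix.transpose_mul, wJ_tr]; simp only [mul_assoc]
    · right; rw [hGH, h, Matrix.transpose_neg, Matrix.transpose_mul, wJ_tr]
      simp only [mul_assoc, neg_mul, mul_neg, neg_neg]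
  rcases hfin with hfin | hfin
  · left
    exact pull_eq G H _ hasymG hG2 hasymH hH2 hfin
  · right
    refine pull_eq G (dual H) _ hasymG hG2 ?_ ?_ hfin
    · intro a b c d
      simp only [dual]
      rw [← mul_neg]
      simp only [← Finset.sum_neg_distrib]
      congr 1
      refine Finset.sum_congr rfl fun i _ => Finset.sum_congr rfl fun j _ =>
        Finset.sum_congr rfl fun k _ => Finset.sum_congr rfl fun l _ => ?_
      rw [eps_asymm a b]; ring
    · intro a b c d
      simp only [dual]
      rw [← mul_neg]
      simp only [← Finset.sum_neg_distrib]
      congr 1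
      refine Finset.sum_congr rfl fun i _ => Finset.sum_congr rfl fun j _ =>
        Finset.sum_congr rfl fun k _ => Finset.sum_congr rfl fun l _ => ?_
      rw [eps_asymm c d]; ring

end
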